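/- arXiv:1209.1793 — 3 statements merged into one kernel-verified Lean document; each statement's English description precedes it below -/
import Mathlib

section
/- The projection commutes with differentiation: d(π_h T) = π_h(dT). Precisely, suppose T : ℝ → ℝ is continuously differentiable, T_h = ∑_{j=0}^n T̄_j N_j interpolates T at every node (T_h(x_i) = T(x_i) for i = 0, …, n), and u_h = ∑_{j=1}^n ū_j M_j histopolates T′, i.e. ∫_{x_{i−1}}^{x_i} u_h(x) dx = ∫_{x_{i−1}}^{x_i} T′(x) dx for i = 1, …, n. If moreover the histopolation problem has a unique solution in the sense that the only coefficients c_1, …, c_n with ∑_{j=1}^n c_j ∫_{x_{i−1}}^{x_i} M_j(x) dx = 0 for all i = 1, …, n are c_1 = ⋯ = c_n = 0, then T_h′(x) = u_h(x) for all x ∈ ℝ. -/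
/-!
Abel summation together with `∑ N_j' = 0` (the derivative of the partition of unity) gives
`T_h' = ∑_{j=1}^n (T̄_j - T̄_{j-1}) M_j`, so `T_h'` lies in the span of the edge functions.
By the fundamental theorem of calculus and the interpolation conditions, `T_h'` and `T'` have the
same integral over every edge, so `T_h'` histopolates `T'` as well. Uniqueness of the
histopolation problem, applied to `c_j = T̄_j - T̄_{j-1} - ū_j`, forces the coefficients to agree.
-/

open intervalIntegral

/-- Abel summation, with the tail sums `∑_{k=j}^n d_k` of the second factor. -/
lemma abel_summation_tail (a d : ℕ → ℝ) (n : ℕ) :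
    ∑ j ∈ Finset.range (n + 1), a j * d j =
      a 0 * ∑ j ∈ Finset.range (n + 1), d j +
        ∑ j ∈ Finset.Icc 1 n, (a j - a (j - 1)) * ∑ k ∈ Finset.Icc j n, d k := by
  induction n with
  | zero => simp
  | succ n ih =>
    have htel : ∀ m : ℕ, ∑ j ∈ Finset.Icc 1 m, (a j - a (j - 1)) = a m - a 0 := by
      intro m
      induction m with
      | zero => simp
      | succ m ihm =>
        rw [Finset.sum_Icc_succ_top (by omega), ihm, Nat.add_sub_cancel]
        ring
    have htail : ∑ j ∈ Finset.Icc 1 n, (a j - a (j - 1)) * ∑ k ∈ Finset.Icc j (n + 1), d k =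
        ∑ j ∈ Finset.Icc 1 n, (a j - a (j - 1)) * ∑ k ∈ Finset.Icc j n, d k +
          (a n - a 0) * d (n + 1) := by
      rw [← htel n, Finset.sum_mul, ← Finset.sum_add_distrib]
      refine Finset.sum_congr rfl fun j hj => ?_
      rw [Finset.mem_Icc] at hj
      rw [Finset.sum_Icc_succ_top (by omega), mul_add]
    rw [Finset.sum_range_succ, ih, Finset.sum_range_succ _ (n + 1),
      Finset.sum_Icc_succ_top (by omega) (fun j => (a j - a (j - 1)) * _), htail,
      Finset.Icc_self, Finset.sum_singleton, Nat.add_sub_cancel]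
    ring

/-- The projection commutes with differentiation: if `T_h` interpolates `T` at the
nodes and `u_h` histopolates `T'` over the edges, and the histopolation problem has
a unique solution, then `T_h' = u_h` everywhere, i.e. `d(π_h T) = π_h (dT)`. -/
theorem projection_commutes_with_differentiation
    (n : ℕ) (hn : 1 ≤ n) (N : ℕ → ℝ → ℝ)
    (hsmooth : ∀ i ≤ n, ContDiff ℝ 1 (N i))
    (hpu : ∀ x : ℝ, ∑ i ∈ Finset.range (n + 1), N i x = 1)
    (M : ℕ → ℝ → ℝ)
    (hM : ∀ i x, M i x = ∑ j ∈ Finset.Icc i n, deriv (N j) x)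
    (xs : ℕ → ℝ) (hxs : ∀ i < n, xs i < xs (i + 1))
    (T : ℝ → ℝ) (hT : ContDiff ℝ 1 T)
    (Tbar : ℕ → ℝ) (ubar : ℕ → ℝ)
    (Th : ℝ → ℝ) (hTh : ∀ x, Th x = ∑ j ∈ Finset.range (n + 1), Tbar j * N j x)
    (uh : ℝ → ℝ) (huh : ∀ x, uh x = ∑ j ∈ Finset.Icc 1 n, ubar j * M j x)
    (hinterp : ∀ i ≤ n, Th (xs i) = T (xs i))
    (hhisto : ∀ i, 1 ≤ i → i ≤ n →
      (∫ t in (xs (i - 1))..(xs i), uh t) = ∫ t in (xs (i - 1))..(xs i), deriv T t)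
    (huniq : ∀ c : ℕ → ℝ,
      (∀ i, 1 ≤ i → i ≤ n →
        ∑ j ∈ Finset.Icc 1 n, c j * ∫ t in (xs (i - 1))..(xs i), M j t = 0) →
      ∀ j, 1 ≤ j → j ≤ n → c j = 0) :
    ∀ x : ℝ, deriv Th x = uh x := by
  have hdiff : ∀ j ∈ Finset.range (n + 1), Differentiable ℝ (N j) := fun j hj =>
    (hsmooth j (Nat.lt_succ_iff.mp (Finset.mem_range.mp hj))).differentiable one_ne_zero
  have hpu' : ∀ x, ∑ j ∈ Finset.range (n + 1), deriv (N j) x = 0 := by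
    intro x
    rw [← deriv_fun_sum fun j hj => hdiff j hj x]
    simp [hpu]
  have hThfun : Th = fun x => ∑ j ∈ Finset.range (n + 1), Tbar j * N j x := funext hTh
  have hThC : ContDiff ℝ 1 Th := by
    rw [hThfun]
    exact ContDiff.sum fun j hj =>
      contDiff_const.mul (hsmooth j (Nat.lt_succ_iff.mp (Finset.mem_range.mp hj)))
  have hderiv : ∀ x, deriv Th x = ∑ j ∈ Finset.Icc 1 n, (Tbar j - Tbar (j - 1)) * M j x := by
    intro x
    rw [hThfun, deriv_fun_sum fun j hj => (hdiff j hj x).const_mul _]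
    have h := abel_summation_tail Tbar (fun j => deriv (N j) x) n
    rw [hpu' x, mul_zero, zero_add] at h
    simp only [hM, ← h]
    exact Finset.sum_congr rfl fun j hj => deriv_const_mul _ (hdiff j hj x)
  have hMcont : ∀ j, Continuous (M j) := by
    intro j
    rw [funext (hM j)]
    exact continuous_finsetSum _ fun k hk =>
      (hsmooth k (Finset.mem_Icc.mp hk).2).continuous_deriv le_rfl
  have hint : ∀ (c : ℕ → ℝ) (a b : ℝ), ∫ t in a..b, ∑ j ∈ Finset.Icc 1 n, c j * M j t =
      ∑ j ∈ Finset.Icc 1 n, c j * ∫ t in a..b, M j t := by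
    intro c a b
    rw [intervalIntegral.integral_finsetSum fun j _ =>
      ((hMcont j).const_mul (c j)).intervalIntegrable a b]
    simp
  have hFTC : ∀ (f : ℝ → ℝ), ContDiff ℝ 1 f → ∀ a b : ℝ, ∫ t in a..b, deriv f t = f b - f a :=
    fun f hf a b => intervalIntegral.integral_deriv_eq_sub
      (fun x _ => hf.differentiable one_ne_zero x)
      ((hf.continuous_deriv le_rfl).intervalIntegrable a b)
  have hc := huniq (fun j => Tbar j - Tbar (j - 1) - ubar j) fun i hi hin => by
    have h1 := hhisto i hi hin
    rw [hFTC T hT, ← hinterp i hin, ← hinterp (i - 1) (by omega), ← hFTC Th hThC,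
      funext huh, funext hderiv, hint, hint] at h1
    simp only [sub_mul _ (ubar _), Finset.sum_sub_distrib, h1, sub_self]
  intro x
  rw [hderiv, huh]
  refine Finset.sum_congr rfl fun j hj => ?_
  rw [Finset.mem_Icc] at hj
  rw [sub_eq_zero.mp (hc j hj.1 hj.2)]
end

section
/- Discrete exactness at the zeroth level: if the edge functions M_1, …, M_n are linearly independent (as functions ℝ → ℝ) and the expansion T_h = ∑_{i=0}^n T_i N_i has identically zero derivative, then all coefficients are equal, T_0 = T_1 = ⋯ = T_n, and consequently T_h is the constant function with value T_0. -/
/-!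
Summation by parts rewrites the derivative of `∑ T_i N_i` in the edge functions:
since `∑ N_j' = 0` (the partition of unity differentiated),
`∑ T_j N_j' = ∑ (T_i - T_{i-1}) M_i`. If this vanishes identically, linear
independence forces `T_i = T_{i-1}` for `1 ≤ i ≤ n`, so all coefficients are `T_0`,
and the partition of unity then gives `T_h = T_0`.
-/

/-- Summation by parts; the last term vanishes when `a j` is the derivative of the
`j`-th member of a partition of unity. -/
lemma sum_diff_mul_tail (T a : ℕ → ℝ) (n : ℕ) :
    ∑ i ∈ Finset.Icc 1 n, (T i - T (i - 1)) * ∑ j ∈ Finset.Icc i n, a j =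
      ∑ j ∈ Finset.range (n + 1), T j * a j - T 0 * ∑ j ∈ Finset.range (n + 1), a j := by
  have telescope : ∀ m : ℕ, ∑ i ∈ Finset.Icc 1 m, (T i - T (i - 1)) = T m - T 0 := by
    intro m
    induction m with
    | zero => simp
    | succ k ih =>
      rw [Finset.sum_Icc_succ_top (by omega), ih, Nat.add_sub_cancel]
      ring
  induction n with
  | zero => simp
  | succ k ih =>
    have tail : ∀ i ∈ Finset.Icc 1 (k + 1),
        (T i - T (i - 1)) * ∑ j ∈ Finset.Icc i (k + 1), a j =
          (T i - T (i - 1)) * ∑ j ∈ Finset.Icc i k, a j + (T i - T (i - 1)) * a (k + 1) := by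
      intro i hi
      rw [Finset.sum_Icc_succ_top (Finset.mem_Icc.mp hi).2]
      ring
    rw [Finset.sum_congr rfl tail, Finset.sum_add_distrib, ← Finset.sum_mul, telescope,
      Finset.sum_Icc_succ_top (by omega), ih, Finset.sum_range_succ _ (k + 1),
      Finset.sum_range_succ _ (k + 1), Finset.Icc_eq_empty (by omega : ¬ k + 1 ≤ k),
      Finset.sum_empty]
    ring

/-- Discrete exactness at the zeroth level: if the edge functions `M_1, …, M_n`
are linearly independent as functions `ℝ → ℝ` and the expansion
`T_h = ∑ T_i N_i` has identically zero derivative, then all coefficients agree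
and `T_h` is the constant function with value `T_0`. -/
theorem discrete_exactness_zeroth_level
    (n : ℕ) (hn : 1 ≤ n) (N : ℕ → ℝ → ℝ)
    (hdiff : ∀ i ≤ n, Differentiable ℝ (N i))
    (hpu : ∀ x : ℝ, ∑ i ∈ Finset.range (n + 1), N i x = 1)
    (M : ℕ → ℝ → ℝ)
    (hM : ∀ i x, M i x = ∑ j ∈ Finset.Icc i n, deriv (N j) x)
    (hindep : ∀ c : ℕ → ℝ,
      (∀ x : ℝ, ∑ i ∈ Finset.Icc 1 n, c i * M i x = 0) →
      ∀ i, 1 ≤ i → i ≤ n → c i = 0)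
    (T : ℕ → ℝ)
    (hzero : ∀ x : ℝ,
      deriv (fun y => ∑ i ∈ Finset.range (n + 1), T i * N i y) x = 0) :
    (∀ i ≤ n, T i = T 0) ∧
      ∀ x : ℝ, (∑ i ∈ Finset.range (n + 1), T i * N i x) = T 0 := by
  have hderiv : ∀ (c : ℕ → ℝ) (x : ℝ),
      deriv (fun y => ∑ i ∈ Finset.range (n + 1), c i * N i y) x =
        ∑ i ∈ Finset.range (n + 1), c i * deriv (N i) x := by
    intro c x
    refine (HasDerivAt.fun_sum fun i hi => ?_).deriv
    exact ((hdiff i (Nat.lt_succ_iff.mp (Finset.mem_range.mp hi))) x).hasDerivAt.const_mul (c i)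
  have hsum : ∀ x, ∑ i ∈ Finset.range (n + 1), deriv (N i) x = 0 := by
    intro x
    have h := hderiv (fun _ => 1) x
    simp only [one_mul, hpu, deriv_const] at h
    exact h.symm
  have hstep := hindep (fun i => T i - T (i - 1)) (by
    intro x
    simp only [hM]
    rw [sum_diff_mul_tail T (fun j => deriv (N j) x) n, hsum, ← hderiv, hzero]
    simp)
  have hT : ∀ i ≤ n, T i = T 0 := by
    intro i
    induction i with
    | zero => intro _; rfl
    | succ k ih =>
      intro hk
      have h := hstep (k + 1) (by omega) hk
      simp only [Nat.add_sub_cancel] at h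
      linarith [ih (by omega)]
  refine ⟨hT, fun x => ?_⟩
  rw [Finset.sum_congr rfl fun i hi => by
    rw [hT i (Nat.lt_succ_iff.mp (Finset.mem_range.mp hi))], ← Finset.mul_sum, hpu, mul_one]
end

section
/- Tensor-product discrete curl: for coefficients a_{ij} (1 ≤ i ≤ n₁, 0 ≤ j ≤ n₂) and b_{ij} (0 ≤ i ≤ n₁, 1 ≤ j ≤ n₂), the two-dimensional curl of the 1-form expansion satisfies, for all (x,y) ∈ ℝ², ∂/∂x ( ∑_{i=0}^{n₁} ∑_{j=1}^{n₂} b_{ij} N_i(x) M̃_j(y) ) − ∂/∂y ( ∑_{i=1}^{n₁} ∑_{j=0}^{n₂} a_{ij} M_i(x) Ñ_j(y) ) = ∑_{i=1}^{n₁} ∑_{j=1}^{n₂} [ (b_{ij} − b_{i−1,j}) − (a_{ij} − a_{i,j−1}) ] M_i(x) M̃_j(y); i.e. the curl of a discrete 1-form is a discrete 2-form whose coefficients are obtained purely by differences of the 1-form coefficients. -/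
/-!
The curl formula reduces to one variable. By summation by parts, a combination `∑ c i * N i` of a
partition of unity has derivative `∑ (c i - c (i - 1)) * M i`: the boundary term is `c 0` times the
derivative of `∑ N i = 1`, which vanishes (`hasDerivAt_sum_partition`). For the curl this is applied
in `x` with coefficients `∑ j, b i j * Mtil j y`, and in `y` with coefficients
`∑ i, a i j * M i x`.
-/

/-- Summation by parts against the tail sums of `d`. -/
lemma sum_mul_eq_sum_diff_mul_tail (c d : ℕ → ℝ) (n : ℕ) :
    ∑ i ∈ Finset.range (n + 1), c i * d i
      = c 0 * ∑ i ∈ Finset.range (n + 1), d i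
        + ∑ i ∈ Finset.Icc 1 n, (c i - c (i - 1)) * ∑ k ∈ Finset.Icc i n, d k := by
  have telescope : ∀ m : ℕ, ∑ i ∈ Finset.Icc 1 m, (c i - c (i - 1)) = c m - c 0 := by
    intro m
    induction m with
    | zero => simp
    | succ m ih => rw [Finset.sum_Icc_succ_top (by omega), ih, Nat.add_sub_cancel]; ring
  induction n with
  | zero => simp
  | succ n ih =>
    have tail : ∑ i ∈ Finset.Icc 1 n, (c i - c (i - 1)) * ∑ k ∈ Finset.Icc i (n + 1), d k
        = ∑ i ∈ Finset.Icc 1 n, (c i - c (i - 1)) * ∑ k ∈ Finset.Icc i n, d k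
          + (c n - c 0) * d (n + 1) := by
      rw [← telescope n, Finset.sum_mul, ← Finset.sum_add_distrib]
      refine Finset.sum_congr rfl fun i hi => ?_
      rw [Finset.sum_Icc_succ_top (by have := (Finset.mem_Icc.1 hi).2; omega)]
      ring
    rw [Finset.sum_range_succ, ih, Finset.sum_range_succ d (n + 1),
      Finset.sum_Icc_succ_top (by omega), tail, Finset.Icc_self, Finset.sum_singleton,
      Nat.add_sub_cancel]
    ring

/-- The one-dimensional discrete derivative: differentiating a combination of a partition of unity
takes differences of the coefficients. -/
lemma hasDerivAt_sum_partition (n : ℕ) (N M : ℕ → ℝ → ℝ)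
    (hdiff : ∀ i ≤ n, Differentiable ℝ (N i))
    (hpu : ∀ x : ℝ, ∑ i ∈ Finset.range (n + 1), N i x = 1)
    (hM : ∀ i x, M i x = ∑ k ∈ Finset.Icc i n, deriv (N k) x) (c : ℕ → ℝ) (x : ℝ) :
    HasDerivAt (fun t => ∑ i ∈ Finset.range (n + 1), c i * N i t)
      (∑ i ∈ Finset.Icc 1 n, (c i - c (i - 1)) * M i x) x := by
  have hN : ∀ i ∈ Finset.range (n + 1), HasDerivAt (N i) (deriv (N i) x) x := fun i hi =>
    (hdiff i (Nat.lt_succ_iff.1 (Finset.mem_range.1 hi)) x).hasDerivAt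
  have hzero : ∑ i ∈ Finset.range (n + 1), deriv (N i) x = 0 := by
    have h := HasDerivAt.fun_sum hN
    simp only [hpu] at h
    exact h.unique (hasDerivAt_const x 1)
  have h := HasDerivAt.fun_sum fun i hi => (hN i hi).const_mul (c i)
  rw [sum_mul_eq_sum_diff_mul_tail c (fun i => deriv (N i) x) n, hzero, mul_zero, zero_add] at h
  simpa only [hM] using h

/-- Tensor-product discrete curl: the 2D curl of a discrete 1-form expansion is a
discrete 2-form whose coefficients are obtained purely by differences of the
1-form coefficients. -/
theorem tensor_product_discrete_curl
    (n₁ n₂ : ℕ) (hn₁ : 1 ≤ n₁) (hn₂ : 1 ≤ n₂)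
    (N : ℕ → ℝ → ℝ)
    (hdiffN : ∀ i ≤ n₁, Differentiable ℝ (N i))
    (hpuN : ∀ x : ℝ, ∑ i ∈ Finset.range (n₁ + 1), N i x = 1)
    (M : ℕ → ℝ → ℝ)
    (hM : ∀ i x, M i x = ∑ k ∈ Finset.Icc i n₁, deriv (N k) x)
    (Ntil : ℕ → ℝ → ℝ)
    (hdiffNtil : ∀ j ≤ n₂, Differentiable ℝ (Ntil j))
    (hpuNtil : ∀ y : ℝ, ∑ j ∈ Finset.range (n₂ + 1), Ntil j y = 1)
    (Mtil : ℕ → ℝ → ℝ)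
    (hMtil : ∀ j y, Mtil j y = ∑ k ∈ Finset.Icc j n₂, deriv (Ntil k) y)
    (a b : ℕ → ℕ → ℝ) (x y : ℝ) :
    deriv (fun t => ∑ i ∈ Finset.range (n₁ + 1), ∑ j ∈ Finset.Icc 1 n₂,
        b i j * N i t * Mtil j y) x
      - deriv (fun t => ∑ i ∈ Finset.Icc 1 n₁, ∑ j ∈ Finset.range (n₂ + 1),
          a i j * M i x * Ntil j t) y
      = ∑ i ∈ Finset.Icc 1 n₁, ∑ j ∈ Finset.Icc 1 n₂,
          ((b i j - b (i - 1) j) - (a i j - a i (j - 1))) * M i x * Mtil j y := by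
  have hb : (fun t => ∑ i ∈ Finset.range (n₁ + 1), ∑ j ∈ Finset.Icc 1 n₂, b i j * N i t * Mtil j y)
      = fun t => ∑ i ∈ Finset.range (n₁ + 1), (∑ j ∈ Finset.Icc 1 n₂, b i j * Mtil j y) * N i t := by
    funext t
    simp only [Finset.sum_mul, mul_right_comm]
  have ha : (fun t => ∑ i ∈ Finset.Icc 1 n₁, ∑ j ∈ Finset.range (n₂ + 1), a i j * M i x * Ntil j t)
      = fun t => ∑ j ∈ Finset.range (n₂ + 1), (∑ i ∈ Finset.Icc 1 n₁, a i j * M i x) * Ntil j t := by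
    funext t
    rw [Finset.sum_comm]
    simp only [Finset.sum_mul]
  rw [hb, ha, (hasDerivAt_sum_partition n₁ N M hdiffN hpuN hM _ x).deriv,
    (hasDerivAt_sum_partition n₂ Ntil Mtil hdiffNtil hpuNtil hMtil _ y).deriv]
  simp only [← Finset.sum_sub_distrib, Finset.sum_mul]
  rw [Finset.sum_comm (s := Finset.Icc 1 n₂)]
  simp only [← Finset.sum_sub_distrib]
  refine Finset.sum_congr rfl fun i _ => Finset.sum_congr rfl fun j _ => ?_
  ring
end
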